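/- arXiv:1710.08143 — 2 statements merged into one kernel-verified Lean document; each statement's English description precedes it below -/
import Mathlib

section
/- Let G be a finite connected unicyclic simple graph (i.e., a connected graph containing exactly one cycle, equivalently a connected graph whose number of edges equals its number of vertices). Then the distinguishing index of G equals its distinguishing number, i.e., D'(G) = D(G). -/
open SimpleGraph

/-- The distinguishing number of a simple graph `G`: the least `d` such that there is a
vertex labeling with `d` labels preserved only by the trivial automorphism. -/
noncomputable def distinguishingNumber {V : Type*} (G : SimpleGraph V) : ℕ :=
  sInf {d : ℕ | ∃ φ : V → Fin d,
    ∀ f : G ≃g G, (∀ x : V, φ (f x) = φ x) → ∀ x : V, f x = x}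

/-- The distinguishing index of a simple graph `G`: the least `d` such that there is an
edge labeling with `d` labels preserved only by the trivial automorphism. -/
noncomputable def distinguishingIndex {V : Type*} (G : SimpleGraph V) : ℕ :=
  sInf {d : ℕ | ∃ ψ : G.edgeSet → Fin d,
    ∀ f : G ≃g G, (∀ e : G.edgeSet, ψ (f.mapEdgeSet e) = ψ e) → ∀ x : V, f x = x}

/-!
A connected unicyclic graph is a tree plus one edge `ab`. Rooting the tree at `a` and orienting
`ab` from `a` to `b` gives every vertex out-degree one, so `v ↦ {v, succ v}` is a bijection from
vertices to edges. It commutes with automorphisms off the cycle, while the reflection `i ↦ s - i`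
of the cycle vertices acts on the cycle edges as `i ↦ s - 1 - i`. Only the labels on the cycle need
changing when a labeling is carried across this bijection. If every reflection of the cycle comes
from an automorphism respecting the labels off the cycle, then the labels on the cycle have no
reflection symmetry, and can be kept. Otherwise relabel the cycle so that its only nontrivial
symmetry is one missing reflection.
-/

/-! ### Labelings of `ZMod n` and their dihedral symmetries -/

section ZModLabelings

variable {n : ℕ} {α : Type*}

lemma zmod_two_ne_zero (hn : 2 < n) : (2 : ZMod n) ≠ 0 := by
  intro h
  have h' : ((2 : ℕ) : ZMod n) = 0 := mod_cast h
  exact absurd (Nat.le_of_dvd two_pos ((ZMod.natCast_eq_zero_iff 2 n).1 h')) hn.not_ge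

lemma zmod_induction_of_succ [NeZero n] {P : ZMod n → Prop} (i₀ : ZMod n) (base : P i₀)
    (succ : ∀ i, P i → P (i + 1)) (i : ZMod n) : P i := by
  have key : ∀ k : ℕ, P (i₀ + k) := by
    intro k
    induction k with
    | zero => simpa using base
    | succ k ih => simpa [add_assoc] using succ _ ih
  simpa using key (i - i₀).val

lemma exists_eq_add_self_or_eq_add_self_add_one (s : ZMod n) :
    ∃ h : ZMod n, s = h + h ∨ s = h + h + 1 := by
  obtain ⟨k, rfl⟩ := ZMod.intCast_surjective s
  obtain ⟨h, rfl | rfl⟩ := Int.even_or_odd' k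
  · exact ⟨h, .inl (by push_cast; ring)⟩
  · exact ⟨h, .inr (by push_cast; ring)⟩

lemma exists_set_forall_symmetry_eq (h2 : (2 : ZMod n) ≠ 0) (s₀ : ZMod n) :
    ∃ A : Set (ZMod n), (∀ r, (∀ x, x + r ∈ A ↔ x ∈ A) → r = 0) ∧
      ∀ s, (∀ x, s - x ∈ A ↔ x ∈ A) → s = s₀ := by
  -- The witness is the vertex `h` or the edge `{h, h + 1}` of the `n`-cycle fixed by `i ↦ s₀ - i`.
  obtain ⟨h, rfl | rfl⟩ := exists_eq_add_self_or_eq_add_self_add_one s₀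
  · refine ⟨{h}, fun r hr => ?_, fun s hs => ?_⟩
    · simpa using hr h
    · simpa [sub_eq_iff_eq_add] using hs h
  · refine ⟨{h, h + 1}, fun r hr => ?_, fun s hs => ?_⟩
    · have h₀ := (hr h).2 (by simp)
      have h₁ := (hr (h + 1)).2 (by simp)
      simp only [Set.mem_insert_iff, Set.mem_singleton_iff] at h₀ h₁
      grind
    · have h₀ := (hs h).2 (by simp)
      have h₁ := (hs (h + 1)).2 (by simp)
      simp only [Set.mem_insert_iff, Set.mem_singleton_iff] at h₀ h₁
      grind

lemma exists_labeling_forall_symmetry_eq [Nontrivial α] (h2 : (2 : ZMod n) ≠ 0) (s₀ : ZMod n) :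
    ∃ b : ZMod n → α, (∀ r, (∀ x, b (x + r) = b x) → r = 0) ∧
      ∀ s, (∀ x, b (s - x) = b x) → s = s₀ := by
  classical
  obtain ⟨p, q, hpq⟩ := exists_pair_ne α
  obtain ⟨A, hrot, hrefl⟩ := exists_set_forall_symmetry_eq h2 s₀
  have mem_iff {x y : ZMod n} (h : (if x ∈ A then p else q) = if y ∈ A then p else q) :
      x ∈ A ↔ y ∈ A := by
    split_ifs at h <;> simp_all
  exact ⟨fun x => if x ∈ A then p else q, fun r hr => hrot r fun x => mem_iff (hr x),
    fun s hs => hrefl s fun x => mem_iff (hs x)⟩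

lemma exists_labeling_avoiding_translated_reflections (h2 : (2 : ZMod n) ≠ 0) (a : ZMod n → α)
    (S : Set (ZMod n)) (t : ZMod n) (hS : ∀ s ∈ S, ¬ ∀ x, a (s - x) = a x) :
    ∃ b : ZMod n → α, (∀ r, (∀ x, b (x + r) = b x) → ∀ x, a (x + r) = a x) ∧
      ∀ s ∈ S, ¬ ∀ x, b (s + t - x) = b x := by
  by_cases hall : ∀ s, s ∈ S
  · exact ⟨a, fun _ => id, fun s _ => hS _ (hall _)⟩
  obtain ⟨s₀, hs₀⟩ := not_forall.1 hall
  rcases subsingleton_or_nontrivial α with _ | _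
  · exact ⟨a, fun _ => id, fun s hs => (hS s hs fun _ => Subsingleton.elim _ _).elim⟩
  obtain ⟨b, hrot, hrefl⟩ := exists_labeling_forall_symmetry_eq (α := α) h2 (s₀ + t)
  refine ⟨b, fun r hr x => by rw [hrot r hr, add_zero], fun s hs hsymm => hs₀ ?_⟩
  exact add_right_cancel (hrefl (s + t) hsymm) ▸ hs

end ZModLabelings

/-! ### Distinguishing labelings of group actions -/

/-- A labeling of a `Γ`-set is distinguishing if only the identity of `Γ` preserves it. -/
def IsDistinguishing (Γ : Type*) {X α : Type*} [One Γ] [SMul Γ X] (φ : X → α) : Prop :=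
  ∀ γ : Γ, (∀ x, φ (γ • x) = φ x) → γ = 1

/-- A bijection `κ : X ≃ Y` between `Γ`-sets is a dihedral twist along `c : ZMod n → X` if it is
equivariant off the range of `c`, while `Γ` acts on the points `c i` and on the points `κ (c i)`
by rotations and reflections of the index `i`, with the same rotations but with every reflection
translated by `t`. -/
structure IsDihedralTwist (Γ : Type*) {X Y : Type*} [Group Γ] [MulAction Γ X] [MulAction Γ Y]
    {n : ℕ} (c : ZMod n → X) (κ : X ≃ Y) (t : ZMod n) : Prop where
  injective : Function.Injective c
  map_smul : ∀ (γ : Γ), ∀ x ∉ Set.range c, κ (γ • x) = γ • κ x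
  rotation_or_reflection : ∀ γ : Γ,
    (∃ r, ∀ i, γ • c i = c (i + r) ∧ γ • κ (c i) = κ (c (i + r))) ∨
      ∃ s, ∀ i, γ • c i = c (s - i) ∧ γ • κ (c i) = κ (c (s + t - i))

namespace IsDihedralTwist

variable {Γ X Y α : Type*} [Group Γ] [MulAction Γ X] [MulAction Γ Y] {n : ℕ} {c : ZMod n → X}
  {κ : X ≃ Y} {t : ZMod n}

protected lemma symm (h : IsDihedralTwist Γ c κ t) : IsDihedralTwist Γ (κ ∘ c) κ.symm (-t) where
  injective := κ.injective.comp h.injective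
  map_smul γ y hy := by
    have hy' : κ.symm y ∉ Set.range c := by
      rintro ⟨i, hi⟩
      exact hy ⟨i, by simp [hi]⟩
    rw [κ.symm_apply_eq, h.map_smul γ _ hy', κ.apply_symm_apply]
  rotation_or_reflection γ := by
    rcases h.rotation_or_reflection γ with ⟨r, hr⟩ | ⟨s, hs⟩
    · exact .inl ⟨r, fun i => by simp [hr]⟩
    · exact .inr ⟨s + t, fun i => by simp [hs]⟩

lemma smul_notMem_range (h : IsDihedralTwist Γ c κ t) (γ : Γ) {x : X} (hx : x ∉ Set.range c) :
    γ • x ∉ Set.range c := by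
  rintro ⟨i, hi⟩
  rw [eq_comm, ← eq_inv_smul_iff] at hi
  rcases h.rotation_or_reflection γ⁻¹ with ⟨r, hr⟩ | ⟨s, hs⟩
  · exact hx ⟨i + r, by rw [hi, (hr i).1]⟩
  · exact hx ⟨s - i, by rw [hi, (hs i).1]⟩

theorem exists_isDistinguishing (h : IsDihedralTwist Γ c κ t) (h2 : (2 : ZMod n) ≠ 0)
    (hX : ∃ φ : X → α, IsDistinguishing Γ φ) : ∃ ψ : Y → α, IsDistinguishing Γ ψ := by
  obtain ⟨φ, hφ⟩ := hX
  let PreservesOffCycle (γ : Γ) : Prop := ∀ x ∉ Set.range c, φ (γ • x) = φ x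
  have eq_one {γ : Γ} (hoff : PreservesOffCycle γ) (hon : ∀ i, φ (γ • c i) = φ (c i)) : γ = 1 :=
    hφ γ fun x => (em (x ∈ Set.range c)).elim (fun ⟨i, hi⟩ => hi ▸ hon i) (hoff x)
  obtain ⟨b, hrot, hrefl⟩ := exists_labeling_avoiding_translated_reflections h2 (φ ∘ c)
    {s | ∃ γ : Γ, PreservesOffCycle γ ∧ ∀ i, γ • c i = c (s - i)} t <| by
      rintro s ⟨γ, hoff, hγ⟩ hs
      obtain rfl := eq_one hoff fun i => by rw [hγ]; exact hs i
      have hs_sub (i : ZMod n) : i = s - i := h.injective (by rw [← hγ, one_smul])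
      exact h2 (by linear_combination hs_sub 1 - hs_sub 0)
  let φ' : X → α := Function.extend c b φ
  have φ'_on (i : ZMod n) : φ' (c i) = b i := h.injective.extend_apply b φ i
  have φ'_off {x : X} (hx : x ∉ Set.range c) : φ' x = φ x := Function.extend_apply' b φ x hx
  refine ⟨φ' ∘ κ.symm, fun γ hγ => ?_⟩
  have hoff : PreservesOffCycle γ := fun x hx => by
    have := hγ (κ x)
    simpa [← h.map_smul γ x hx, φ'_off hx, φ'_off (h.smul_notMem_range γ hx)] using this
  rcases h.rotation_or_reflection γ with ⟨r, hr⟩ | ⟨s, hs⟩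
  · have hb (i : ZMod n) : b (i + r) = b i := by simpa [hr, φ'_on] using hγ (κ (c i))
    exact eq_one hoff fun i => by rw [(hr i).1]; exact hrot r hb i
  · have hb (i : ZMod n) : b (s + t - i) = b i := by simpa [hs, φ'_on] using hγ (κ (c i))
    exact (hrefl s ⟨γ, hoff, fun i => (hs i).1⟩ hb).elim

theorem exists_isDistinguishing_iff (h : IsDihedralTwist Γ c κ t) (h2 : (2 : ZMod n) ≠ 0) :
    (∃ ψ : Y → α, IsDistinguishing Γ ψ) ↔ ∃ φ : X → α, IsDistinguishing Γ φ :=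
  ⟨h.symm.exists_isDistinguishing h2, h.exists_isDistinguishing h2⟩

end IsDihedralTwist

section AutomorphismActions

variable {V : Type*} {G : SimpleGraph V}

instance edgeSetMulAction : MulAction (G ≃g G) G.edgeSet where
  smul f e := f.mapEdgeSet e
  one_smul e := Subtype.ext (congrFun Sym2.map_id e.val)
  mul_smul f g e := Subtype.ext (Sym2.map_map (f := g) (g := f) e.val).symm

lemma isDistinguishing_iff_forall_apply_eq {X α : Type*} [MulAction (G ≃g G) X] {φ : X → α} :
    IsDistinguishing (G ≃g G) φ ↔ ∀ f : G ≃g G, (∀ x, φ (f • x) = φ x) → ∀ v, f v = v := by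
  simp only [IsDistinguishing, RelIso.ext_iff, RelIso.coe_one, id]

variable (G) in
lemma distinguishingNumber_eq_sInf_isDistinguishing :
    distinguishingNumber G = sInf {d | ∃ φ : V → Fin d, IsDistinguishing (G ≃g G) φ} := by
  simp only [isDistinguishing_iff_forall_apply_eq]
  rfl

variable (G) in
lemma distinguishingIndex_eq_sInf_isDistinguishing :
    distinguishingIndex G = sInf {d | ∃ ψ : G.edgeSet → Fin d, IsDistinguishing (G ≃g G) ψ} := by
  simp only [isDistinguishing_iff_forall_apply_eq]
  rfl

end AutomorphismActions

/-! ### Unicyclic graphs as functional graphs -/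

/-- A presentation of a unicyclic graph as the graph of a function: the edges are the pairs
`{v, succ v}`, and `succ` moves one step along the cycle of length `n`, and strictly decreases
`rank` off it. The graph need not be finite. -/
structure UnicyclicOrientation {V : Type*} (G : SimpleGraph V) (n : ℕ) where
  succ : V → V
  cycle : ZMod n → V
  rank : V → ℕ
  two_lt : 2 < n
  adj_iff : ∀ v w, G.Adj v w ↔ succ v = w ∨ succ w = v
  cycle_injective : Function.Injective cycle
  succ_cycle : ∀ i, succ (cycle i) = cycle (i + 1)
  rank_succ_lt : ∀ v ∉ Set.range cycle, rank (succ v) < rank v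

namespace UnicyclicOrientation

variable {V : Type*} {G : SimpleGraph V} {n : ℕ} (o : UnicyclicOrientation G n)

lemma neZero (o : UnicyclicOrientation G n) : NeZero n := ⟨(two_pos.trans o.two_lt).ne'⟩

lemma two_ne_zero (o : UnicyclicOrientation G n) : (2 : ZMod n) ≠ 0 := zmod_two_ne_zero o.two_lt

lemma adj_succ (v : V) : G.Adj v (o.succ v) := (o.adj_iff _ _).2 (.inl rfl)

lemma adj_cycle (i : ZMod n) : G.Adj (o.cycle i) (o.cycle (i + 1)) :=
  o.succ_cycle i ▸ o.adj_succ _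

lemma succ_mem_range {v : V} (hv : v ∈ Set.range o.cycle) : o.succ v ∈ Set.range o.cycle := by
  obtain ⟨i, rfl⟩ := hv
  exact ⟨i + 1, (o.succ_cycle i).symm⟩

lemma succ_succ_ne (v : V) : o.succ (o.succ v) ≠ v := by
  intro h
  by_cases hv : v ∈ Set.range o.cycle
  · obtain ⟨i, rfl⟩ := hv
    rw [succ_cycle, succ_cycle] at h
    exact o.two_ne_zero (by linear_combination o.cycle_injective h)
  · have hsv : o.succ v ∉ Set.range o.cycle := fun hs => hv (h ▸ o.succ_mem_range hs)
    have := o.rank_succ_lt v hv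
    have := o.rank_succ_lt _ hsv
    rw [h] at this
    omega

/-- The bijection from vertices to edges sending `v` to the edge oriented out of `v`. -/
noncomputable def outEdge : V ≃ G.edgeSet :=
  .ofBijective (fun v => ⟨s(v, o.succ v), o.adj_succ v⟩) <| by
    refine ⟨fun v w h => ?_, fun ⟨e, he⟩ => ?_⟩
    · rcases Sym2.eq_iff.1 (congrArg Subtype.val h) with ⟨hvw, -⟩ | ⟨hv, hw⟩
      · exact hvw
      · exact (o.succ_succ_ne w (by rw [← hv, hw])).elim
    · induction e with | _ v w
      rcases (o.adj_iff v w).1 he with rfl | rfl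
      · exact ⟨v, rfl⟩
      · exact ⟨w, Subtype.ext Sym2.eq_swap⟩

lemma forall_succ_eq_or_forall_succ_eq {d : ZMod n → V} (hd : Function.Injective d)
    (hadj : ∀ i, G.Adj (d i) (d (i + 1))) :
    (∀ i, o.succ (d i) = d (i + 1)) ∨ ∀ i, o.succ (d (i + 1)) = d i := by
  have := o.neZero
  by_cases hback : ∃ i₀, o.succ (d (i₀ + 1)) = d i₀
  · obtain ⟨i₀, hi₀⟩ := hback
    refine .inr (zmod_induction_of_succ i₀ hi₀ fun i hi => ?_)
    -- `d (i + 1)` has only one out-edge, and it goes back to `d i`.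
    refine ((o.adj_iff _ _).1 (hadj (i + 1))).resolve_left fun hforth => o.two_ne_zero ?_
    linear_combination -hd (hi.symm.trans hforth)
  · exact .inl fun i => ((o.adj_iff _ _).1 (hadj i)).resolve_right fun h => hback ⟨i, h⟩

lemma exists_eq_cycle_add {d : ZMod n → V} (hd : ∀ i, o.succ (d i) = d (i + 1)) :
    ∃ r, ∀ i, d i = o.cycle (i + r) := by
  have := o.neZero
  obtain ⟨i₀, hmin⟩ := Finite.exists_min (o.rank ∘ d)
  obtain ⟨j₀, hj₀⟩ : d i₀ ∈ Set.range o.cycle := by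
    by_contra hoff
    exact (hmin (i₀ + 1)).not_gt (by simpa [hd] using o.rank_succ_lt _ hoff)
  refine ⟨j₀ - i₀, zmod_induction_of_succ i₀ (by simp [hj₀]) fun i hi => ?_⟩
  rw [← hd, hi, o.succ_cycle, add_right_comm]

lemma exists_rotation_or_reflection (f : G ≃g G) :
    (∃ r, ∀ i, f (o.cycle i) = o.cycle (i + r)) ∨ ∃ s, ∀ i, f (o.cycle i) = o.cycle (s - i) := by
  rcases o.forall_succ_eq_or_forall_succ_eq (f.injective.comp o.cycle_injective)
    fun i => f.map_adj_iff.2 (o.adj_cycle i) with hforth | hback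
  · exact .inl (o.exists_eq_cycle_add hforth)
  · obtain ⟨s, hs⟩ := o.exists_eq_cycle_add (d := fun i => f (o.cycle (-i))) fun i => by
      simpa [-neg_add_rev, neg_add'] using hback (-i - 1)
    exact .inr ⟨s, fun i => by simpa [neg_add_eq_sub] using hs (-i)⟩

lemma apply_mem_range (f : G ≃g G) {v : V} (hv : v ∈ Set.range o.cycle) :
    f v ∈ Set.range o.cycle := by
  obtain ⟨i, rfl⟩ := hv
  rcases o.exists_rotation_or_reflection f with ⟨r, hr⟩ | ⟨s, hs⟩
  · exact ⟨i + r, (hr i).symm⟩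
  · exact ⟨s - i, (hs i).symm⟩

lemma apply_mem_range_iff (f : G ≃g G) {v : V} :
    f v ∈ Set.range o.cycle ↔ v ∈ Set.range o.cycle :=
  ⟨fun h => by simpa using o.apply_mem_range f.symm h, o.apply_mem_range f⟩

lemma succ_apply_succ_ne (f : G ≃g G) {v : V} (hv : v ∉ Set.range o.cycle) :
    o.succ (f (o.succ v)) ≠ f v := by
  induction hk : o.rank v using Nat.strong_induction_on generalizing v with
  | _ k ih =>
    intro hrev
    have hsv : o.succ v ∉ Set.range o.cycle := fun hs =>
      hv <| (o.apply_mem_range_iff f).1 <| hrev ▸ o.succ_mem_range (o.apply_mem_range f hs)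
    rcases (o.adj_iff _ _).1 (f.map_adj_iff.2 (o.adj_succ (o.succ v))) with h | h
    · exact o.succ_succ_ne v (f.injective (h.symm.trans hrev))
    · exact ih _ (hk ▸ o.rank_succ_lt v hv) hsv rfl h

lemma apply_succ (f : G ≃g G) {v : V} (hv : v ∉ Set.range o.cycle) :
    o.succ (f v) = f (o.succ v) :=
  ((o.adj_iff _ _).1 (f.map_adj_iff.2 (o.adj_succ v))).resolve_right (o.succ_apply_succ_ne f hv)

lemma smul_outEdge_eq_outEdge (f : G ≃g G) {v w : V} (h : s(f v, f (o.succ v)) = s(w, o.succ w)) :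
    f • o.outEdge v = o.outEdge w :=
  Subtype.ext h

theorem isDihedralTwist_outEdge : IsDihedralTwist (G ≃g G) o.cycle o.outEdge (-1) where
  injective := o.cycle_injective
  map_smul f v hv := (o.smul_outEdge_eq_outEdge f (by rw [RelIso.smul_def, o.apply_succ f hv])).symm
  rotation_or_reflection f := by
    rcases o.exists_rotation_or_reflection f with ⟨r, hr⟩ | ⟨s, hs⟩
    · refine .inl ⟨r, fun i => ⟨hr i, o.smul_outEdge_eq_outEdge f ?_⟩⟩
      rw [o.succ_cycle, o.succ_cycle, hr, hr, add_right_comm]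
    · refine .inr ⟨s, fun i => ⟨hs i, o.smul_outEdge_eq_outEdge f ?_⟩⟩
      rw [o.succ_cycle, o.succ_cycle, hs, hs, Sym2.eq_swap]
      ring_nf

theorem distinguishingIndex_eq_distinguishingNumber (o : UnicyclicOrientation G n) :
    distinguishingIndex G = distinguishingNumber G := by
  simp only [distinguishingIndex_eq_sInf_isDistinguishing,
    distinguishingNumber_eq_sInf_isDistinguishing,
    o.isDihedralTwist_outEdge.exists_isDistinguishing_iff o.two_ne_zero]

end UnicyclicOrientation

/-! ### Orienting a tree plus an edge -/

section Tree

variable {V : Type*} {G : SimpleGraph V}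

lemma exists_adj_dist_eq_dist_add_one (hG : G.Connected) {v a : V} (hv : v ≠ a) :
    ∃ w, G.Adj v w ∧ G.dist v a = G.dist w a + 1 := by
  obtain ⟨p, hp⟩ := hG.exists_walk_length_eq_dist v a
  cases p with
  | nil => exact (hv rfl).elim
  | @cons _ w _ hvw q =>
    refine ⟨w, hvw, ?_⟩
    have := dist_le q
    have := hG.dist_triangle (u := v) (v := w) (w := a)
    rw [dist_eq_one_iff_adj.2 hvw] at this
    rw [Walk.length_cons] at hp
    omega

lemma eq_of_adj_of_dist_eq_dist_add_one (hG : G.IsTree) {v w w' a : V} (hw : G.Adj v w)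
    (hw' : G.Adj v w') (hd : G.dist v a = G.dist w a + 1) (hd' : G.dist v a = G.dist w' a + 1) :
    w = w' := by
  obtain ⟨p, hp⟩ := hG.connected.exists_walk_length_eq_dist w a
  obtain ⟨p', hp'⟩ := hG.connected.exists_walk_length_eq_dist w' a
  have hpath : (Walk.cons hw p).IsPath := Walk.isPath_of_length_eq_dist _ (by simp [hp, hd])
  have hpath' : (Walk.cons hw' p').IsPath := Walk.isPath_of_length_eq_dist _ (by simp [hp', hd'])
  simpa using congrArg Walk.snd ((hG.existsUnique_path v a).unique hpath hpath')

lemma exists_parent (hG : G.IsTree) (a : V) :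
    ∃ parent : V → V, (∀ v ≠ a, G.dist v a = G.dist (parent v) a + 1) ∧
      ∀ v w, G.Adj v w ↔ v ≠ a ∧ parent v = w ∨ w ≠ a ∧ parent w = v := by
  have hex (v : V) (hv : v ≠ a) := exists_adj_dist_eq_dist_add_one hG.connected hv
  choose! parent hadj hdist using hex
  have parent_eq {v w : V} (hvw : G.Adj v w) (hd : G.dist v a = G.dist w a + 1) :
      v ≠ a ∧ parent v = w := by
    have hv : v ≠ a := by
      rintro rfl
      simp at hd
    exact ⟨hv, eq_of_adj_of_dist_eq_dist_add_one hG (hadj v hv) hvw (hdist v hv) hd⟩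
  refine ⟨parent, hdist, fun v w => ⟨fun hvw => ?_, ?_⟩⟩
  · have hd := hG.dist_eq_dist_add_one_of_adj a hvw
    rw [dist_comm, dist_comm (u := a)] at hd
    exact hd.imp (parent_eq hvw) (parent_eq hvw.symm)
  · rintro (⟨hv, rfl⟩ | ⟨hw, rfl⟩)
    · exact hadj v hv
    · exact (hadj w hw).symm

lemma rank_iterate_add {f : V → V} {rank : V → ℕ}
    (hf : ∀ v, rank v ≠ 0 → rank v = rank (f v) + 1) {v : V} {k : ℕ} (hk : k ≤ rank v) :
    rank (f^[k] v) + k = rank v := by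
  induction k with
  | zero => rfl
  | succ k ih =>
    have := ih (by omega)
    have := hf (f^[k] v) (by omega)
    rw [Function.iterate_succ_apply']
    omega

/-- The orientation given by a function `f` that decreases `rank` by one, except at the unique
vertex `a` of rank `0`, which is sent far enough from `a` to close up a cycle. -/
def UnicyclicOrientation.ofRank (f : V → V) (rank : V → ℕ) (a : V)
    (hadj : ∀ v w, G.Adj v w ↔ f v = w ∨ f w = v) (ha : ∀ v, rank v = 0 ↔ v = a)
    (hf : ∀ v, rank v ≠ 0 → rank v = rank (f v) + 1) (hlt : 1 < rank (f a)) :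
    UnicyclicOrientation G (rank (f a) + 1) where
  succ := f
  cycle i := f^[i.val] (f a)
  rank := rank
  two_lt := Nat.succ_lt_succ hlt
  adj_iff := hadj
  cycle_injective i j hij := by
    have hi := rank_iterate_add hf (Nat.lt_succ_iff.1 (ZMod.val_lt i))
    have hj := rank_iterate_add hf (Nat.lt_succ_iff.1 (ZMod.val_lt j))
    simp only [hij] at hi
    exact ZMod.val_injective _ (by omega)
  succ_cycle i := by
    have : Fact (1 < rank (f a) + 1) := ⟨by omega⟩
    have hi := Nat.lt_succ_iff.1 (ZMod.val_lt i)
    rw [← Function.iterate_succ_apply' f, ZMod.val_add, ZMod.val_one]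
    rcases hi.lt_or_eq with hi | hi
    · rw [Nat.mod_eq_of_lt (by omega)]
    · have hroot : f^[i.val] (f a) = a := by
        rw [← ha]
        have := rank_iterate_add hf hi.le
        omega
      rw [Function.iterate_succ_apply', hroot, hi, Nat.mod_self, Function.iterate_zero_apply]
  rank_succ_lt v hv := by
    have hva : rank v ≠ 0 := by
      rw [Ne, ha]
      rintro rfl
      refine hv ⟨((rank (f v) : ℕ) : ZMod _), ?_⟩
      dsimp only
      rw [ZMod.val_natCast_of_lt (Nat.lt_succ_self _), ← ha]
      have := rank_iterate_add hf (le_refl (rank (f v)))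
      omega
    have := hf v hva
    omega

lemma one_lt_dist_deleteEdges {a b : V} (hab : a ≠ b)
    (hconn : (G.deleteEdges {s(a, b)}).Connected) : 1 < (G.deleteEdges {s(a, b)}).dist b a := by
  have hpos := hconn.pos_dist_of_ne hab.symm
  have hne : (G.deleteEdges {s(a, b)}).dist b a ≠ 1 := by
    simp [dist_eq_one_iff_adj, Sym2.eq_swap]
  omega

lemma exists_unicyclicOrientation {e : Sym2 V} (he : e ∈ G.edgeSet)
    (hT : (G.deleteEdges {e}).IsTree) : ∃ n, Nonempty (UnicyclicOrientation G n) := by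
  classical
  induction e with | _ a b
  have hab : G.Adj a b := he
  obtain ⟨parent, hparent, hadj⟩ := exists_parent hT a
  let f : V → V := Function.update parent a b
  have f_root : f a = b := Function.update_self ..
  have f_of_ne {v : V} (hv : v ≠ a) : f v = parent v := Function.update_of_ne hv ..
  have hrank (v : V) : (G.deleteEdges {s(a, b)}).dist v a = 0 ↔ v = a :=
    hT.connected.dist_eq_zero_iff
  refine ⟨_, ⟨.ofRank f (fun v => (G.deleteEdges {s(a, b)}).dist v a) a (fun v w => ?_) hrank
    (fun v hv => ?_) ?_⟩⟩
  · have hG : G.Adj v w ↔ (G.deleteEdges {s(a, b)}).Adj v w ∨ s(v, w) = s(a, b) := by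
      rw [deleteEdges_adj, Set.mem_singleton_iff]
      have : s(v, w) = s(a, b) → G.Adj v w := fun h => by rwa [← mem_edgeSet, h]
      tauto
    rw [hG, hadj, Sym2.eq_iff]
    by_cases hv : v = a <;> by_cases hw : w = a <;> grind
  · rw [Ne, hrank] at hv
    rw [f_of_ne hv, hparent v hv]
  · rw [f_root]
    exact one_lt_dist_deleteEdges hab.ne hT.connected

lemma exists_isTree_deleteEdges [Fintype V] (hconn : G.Connected)
    (hedge : G.edgeSet.ncard = Fintype.card V) :
    ∃ e ∈ G.edgeSet, (G.deleteEdges {e}).IsTree := by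
  have hcyc : ¬ G.IsAcyclic := fun hacyc => by
    have := (isTree_iff_connected_and_card.1 ⟨hconn, hacyc⟩).2
    rw [Nat.card_coe_set_eq, Nat.card_eq_fintype_card] at this
    omega
  rw [isAcyclic_iff_forall_isBridge] at hcyc
  push Not at hcyc
  obtain ⟨e, he, hbridge⟩ := hcyc
  refine ⟨e, he, isTree_iff_connected_and_card.2 ⟨?_, ?_⟩⟩
  · induction e with | _ a b
    exact hconn.connected_delete_edge_of_not_isBridge hbridge
  · rw [Nat.card_coe_set_eq, edgeSet_deleteEdges, Set.ncard_sdiff_singleton_add_one he, hedge,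
      Nat.card_eq_fintype_card]

end Tree

/-- In an infinite graph both sides are `0` when no labeling with finitely many labels is
distinguishing. -/
theorem distinguishingIndex_eq_distinguishingNumber_of_unicyclic_general {V : Type*}
    {G : SimpleGraph V} {e : Sym2 V} (he : e ∈ G.edgeSet) (hT : (G.deleteEdges {e}).IsTree) :
    distinguishingIndex G = distinguishingNumber G := by
  obtain ⟨n, ⟨o⟩⟩ := exists_unicyclicOrientation he hT
  exact o.distinguishingIndex_eq_distinguishingNumber

/-- If `G` is a finite connected unicyclic simple graph (a connected graph whose number of
edges equals its number of vertices), then `D'(G) = D(G)`. -/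
theorem distinguishingIndex_eq_distinguishingNumber_of_unicyclic
    {V : Type*} [Fintype V] (G : SimpleGraph V)
    (hconn : G.Connected) (hedge : G.edgeSet.ncard = Fintype.card V) :
    distinguishingIndex G = distinguishingNumber G := by
  obtain ⟨e, he, hT⟩ := exists_isTree_deleteEdges hconn hedge
  exact distinguishingIndex_eq_distinguishingNumber_of_unicyclic_general he hT
end

section
/- The gap between the distinguishing number and the distinguishing index can be arbitrarily large: for every integer N there exists a finite connected simple graph G with D(G) − D'(G) ≥ N. (In particular, for p ≥ 6 the complete graph K_p satisfies D(K_p) − D'(K_p) = p − 2.) -/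
open SimpleGraph

/-!
Every permutation of the vertices is an automorphism of a complete graph, so a distinguishing
vertex labeling of `K_p` must separate all vertices, and `D(K_p) = p`. On the other hand, two edge
labels suffice as soon as some spanning subgraph `H` has no nontrivial automorphism: label the edges
of `H` differently from the others. For `p ≥ 6` such an `H` is the path `0, 1, …, p - 1` together
with the chord `{1, 3}`: an automorphism preserves its only triangle `1, 2, 3`, and the tails at
these vertices have the distinct lengths `1`, `0` and `p - 4 ≥ 2`.
-/

variable {V W α : Type*} {G H : SimpleGraph V}

section Labelings

/-- A vertex labeling of `G` is distinguishing if only the trivial automorphism preserves it. The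
labels range over an arbitrary type. -/
def IsDistinguishingVertexLabeling (G : SimpleGraph V) (φ : V → α) : Prop :=
  ∀ f : G ≃g G, (∀ v, φ (f v) = φ v) → ∀ v, f v = v

/-- An edge labeling of `G` is distinguishing if only the trivial automorphism preserves it. The
labels range over an arbitrary type. -/
def IsDistinguishingEdgeLabeling (G : SimpleGraph V) (ψ : G.edgeSet → α) : Prop :=
  ∀ f : G ≃g G, (∀ e, ψ (f.mapEdgeSet e) = ψ e) → ∀ v, f v = v

/-- A graph is asymmetric if its only automorphism is the identity, here stated pointwise. -/
def IsAsymmetric (G : SimpleGraph V) : Prop :=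
  ∀ (f : G ≃g G) (v : V), f v = v

theorem IsAsymmetric.of_iso {G' : SimpleGraph W} (hG : IsAsymmetric G) (e : G' ≃g G) :
    IsAsymmetric G' := fun f w ↦ by
  simpa using hG ((e.symm.trans f).trans e) (e w)

theorem not_isAsymmetric_top [Nontrivial V] : ¬ IsAsymmetric (⊤ : SimpleGraph V) := by
  classical
  intro h
  obtain ⟨a, b, hab⟩ := exists_pair_ne V
  have hswap : Equiv.swap a b a = a := h (Iso.completeGraph (Equiv.swap a b)) a
  exact hab (by simpa using hswap.symm)

theorem isDistinguishingVertexLabeling_top_iff_injective {φ : V → α} :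
    IsDistinguishingVertexLabeling ⊤ φ ↔ Function.Injective φ := by
  classical
  refine ⟨fun hφ a b hab ↦ ?_, fun hφ f hf v ↦ hφ (hf v)⟩
  have hpres (v : V) : φ (Equiv.swap a b v) = φ v := by
    grind
  have hswap : Equiv.swap a b a = a := hφ (Iso.completeGraph (Equiv.swap a b)) hpres a
  simpa using hswap.symm

theorem IsDistinguishingEdgeLabeling.isAsymmetric [Subsingleton α] {ψ : G.edgeSet → α}
    (hψ : IsDistinguishingEdgeLabeling G ψ) : IsAsymmetric G :=
  fun f ↦ hψ f fun _ ↦ Subsingleton.elim _ _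

theorem IsAsymmetric.isDistinguishingEdgeLabeling (hH : IsAsymmetric H) (hHG : H ≤ G) :
    IsDistinguishingEdgeLabeling G (fun e ↦ (e : Sym2 V) ∈ H.edgeSet) := by
  intro f hf
  have hadj {a b : V} : H.Adj (f a) (f b) ↔ H.Adj a b := by
    by_cases hab : G.Adj a b
    · exact (hf ⟨s(a, b), hab⟩).to_iff
    · have hfab : ¬ G.Adj (f a) (f b) := by rwa [f.map_adj_iff]
      exact iff_of_false (mt (@hHG _ _) hfab) (mt (@hHG _ _) hab)
  exact hH ⟨f.toEquiv, hadj⟩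

end Labelings

theorem distinguishingIndex_eq_two (hG : ¬ IsAsymmetric G) (hH : IsAsymmetric H) (hHG : H ≤ G) :
    distinguishingIndex G = 2 := by
  classical
  refine IsLeast.csInf_eq ⟨⟨fun e ↦ if e.1 ∈ H.edgeSet then 1 else 0, fun f hf ↦ ?_⟩, ?_⟩
  · refine hH.isDistinguishingEdgeLabeling hHG f fun e ↦ propext ?_
    grind [hf e]
  · rintro d ⟨ψ, hψ⟩
    by_contra! hd
    have : Subsingleton (Fin d) := Fin.subsingleton_iff_le_one.2 (by omega)
    exact hG (IsDistinguishingEdgeLabeling.isAsymmetric hψ)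

section ChordedPath

/-- The one-way infinite path `0, 1, 2, …` with the additional edge `{1, 3}`. -/
def chordedRay : SimpleGraph ℕ :=
  hasse ℕ ⊔ edge 1 3

/-- The path `0, 1, …, n - 1` with the additional edge `{1, 3}` (if `n ≥ 4`), the asymmetric
spanning subgraph of `K_n` for `n ≥ 6`. It is encoded as an induced subgraph of `chordedRay`, so
that its automorphisms can be studied as maps into `ℕ`. -/
def chordedPath (n : ℕ) : SimpleGraph (Fin n) :=
  chordedRay.comap Fin.val

theorem chordedRay_adj {a b : ℕ} :
    chordedRay.Adj a b ↔ a + 1 = b ∨ b + 1 = a ∨ a = 1 ∧ b = 3 ∨ a = 3 ∧ b = 1 := by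
  simp only [chordedRay, sup_adj, hasse_adj, Nat.covBy_iff_add_one_eq, edge_adj]
  omega

theorem mem_Icc_of_chordedRay_triangle {a b c : ℕ} (hab : chordedRay.Adj a b)
    (hac : chordedRay.Adj a c) (hbc : chordedRay.Adj b c) : a ∈ Set.Icc 1 3 := by
  rw [chordedRay_adj] at hab hac hbc
  rw [Set.mem_Icc]
  omega

theorem eq_of_chordedRay_adj_of_mem_Icc_of_notMem {a x : ℕ} (h : chordedRay.Adj a x)
    (ha : a ∈ Set.Icc 1 3) (hx : x ∉ Set.Icc 1 3) : a = 1 ∧ x = 0 ∨ a = 3 ∧ x = 4 := by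
  rw [chordedRay_adj] at h
  rw [Set.mem_Icc] at ha hx
  omega

theorem copy_chordedPath_six_mem_Icc_iff (f : Copy (chordedPath 6) chordedRay) {i : Fin 6} :
    f i ∈ Set.Icc 1 3 ↔ i ∈ Set.Icc 1 3 := by
  have h12 : chordedRay.Adj (f 1) (f 2) := f.toHom.map_adj (by simp [chordedPath, chordedRay_adj])
  have h13 : chordedRay.Adj (f 1) (f 3) := f.toHom.map_adj (by simp [chordedPath, chordedRay_adj])
  have h23 : chordedRay.Adj (f 2) (f 3) := f.toHom.map_adj (by simp [chordedPath, chordedRay_adj])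
  have h1 : f 1 ∈ Set.Icc 1 3 := mem_Icc_of_chordedRay_triangle h12 h13 h23
  have h2 : f 2 ∈ Set.Icc 1 3 := mem_Icc_of_chordedRay_triangle h12.symm h23 h13
  have h3 : f 3 ∈ Set.Icc 1 3 := mem_Icc_of_chordedRay_triangle h13.symm h23.symm h12
  refine ⟨fun hi ↦ ?_, fun hi ↦ ?_⟩
  · have hne (j : Fin 6) (hij : i ≠ j) : f i ≠ f j := f.injective.ne hij
    obtain rfl | rfl | rfl : i = 1 ∨ i = 2 ∨ i = 3 := by
      grind [h12.ne, h13.ne, h23.ne]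
    all_goals decide
  · obtain rfl | rfl | rfl : i = 1 ∨ i = 2 ∨ i = 3 := by grind
    exacts [h1, h2, h3]

theorem copy_chordedPath_six_apply (f : Copy (chordedPath 6) chordedRay) (i : Fin 6) :
    f i = i := by
  have hadj {i j : Fin 6} (h : chordedRay.Adj i j) : chordedRay.Adj (f i) (f j) :=
    f.toHom.map_adj h
  have hne {i j : Fin 6} (h : i ≠ j) : f i ≠ f j := f.injective.ne h
  have htri {i : Fin 6} : f i ∈ Set.Icc 1 3 ↔ i ∈ Set.Icc 1 3 :=
    copy_chordedPath_six_mem_Icc_iff f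
  have h10 : f 1 = 1 ∧ f 0 = 0 ∨ f 1 = 3 ∧ f 0 = 4 :=
    eq_of_chordedRay_adj_of_mem_Icc_of_notMem (hadj (by simp [chordedRay_adj]))
      (htri.2 (by decide)) (htri.not.2 (by decide))
  have h34 : f 3 = 1 ∧ f 4 = 0 ∨ f 3 = 3 ∧ f 4 = 4 :=
    eq_of_chordedRay_adj_of_mem_Icc_of_notMem (hadj (by simp [chordedRay_adj]))
      (htri.2 (by decide)) (htri.not.2 (by decide))
  have h45 : chordedRay.Adj (f 4) (f 5) := hadj (by simp [chordedRay_adj])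
  have hne35 : f 3 ≠ f 5 := hne (by decide)
  have hne13 : f 1 ≠ f 3 := hne (by decide)
  rw [chordedRay_adj] at h45
  -- The tail at `0` is too short to contain the images of both `4` and `5`.
  obtain ⟨hf3, hf4⟩ : f 3 = 3 ∧ f 4 = 4 := by omega
  obtain ⟨hf1, hf0⟩ : f 1 = 1 ∧ f 0 = 0 := by omega
  have hf2 : f 2 = 2 := by
    have hmem : f 2 ∈ Set.Icc 1 3 := htri.2 (by decide)
    grind [hne (i := 2) (j := 1) (by decide), hne (i := 2) (j := 3) (by decide)]
  have hf5 : f 5 = 5 := by omega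
  fin_cases i
  exacts [hf0, hf1, hf2, hf3, hf4, hf5]

theorem copy_chordedPath_apply {n : ℕ} (hn : 6 ≤ n) (f : Copy (chordedPath n) chordedRay)
    (i : Fin n) : f i = i := by
  induction n, hn using Nat.le_induction with
  | base => exact copy_chordedPath_six_apply f i
  | succ n hn ih =>
    let init : chordedPath n ↪g chordedPath (n + 1) := ⟨Fin.castSuccEmb, Iff.rfl⟩
    have hinit (j : Fin n) : f j.castSucc = j := ih (f.comp init.toCopy) j
    induction i using Fin.lastCases with
    | cast j => exact hinit j
    | last =>
      have hpred : f ⟨n - 1, by omega⟩ = n - 1 := hinit ⟨n - 1, by omega⟩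
      have hpred' : f ⟨n - 2, by omega⟩ = n - 2 := hinit ⟨n - 2, by omega⟩
      have hne : f (Fin.last n) ≠ f ⟨n - 2, by omega⟩ := f.injective.ne (by grind)
      have hadj : chordedRay.Adj (f ⟨n - 1, by omega⟩) (f (Fin.last n)) :=
        f.toHom.map_adj (chordedRay_adj.2 (.inl (Nat.sub_add_cancel (by omega))))
      rw [hpred, chordedRay_adj] at hadj
      rw [Fin.val_last]
      omega

theorem isAsymmetric_chordedPath {n : ℕ} (hn : 6 ≤ n) : IsAsymmetric (chordedPath n) :=
  fun f i ↦ Fin.ext <|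
    copy_chordedPath_apply hn ((Embedding.comap Fin.valEmbedding chordedRay).comp
      f.toEmbedding).toCopy i

end ChordedPath

section CompleteGraph

theorem exists_isAsymmetric (hV : 6 ≤ Nat.card V) : ∃ H : SimpleGraph V, IsAsymmetric H := by
  have : Finite V := Nat.finite_of_card_ne_zero (by omega)
  exact ⟨(chordedPath (Nat.card V)).comap (Finite.equivFin V),
    (isAsymmetric_chordedPath hV).of_iso (Iso.comap (Finite.equivFin V) _)⟩

theorem distinguishingNumber_top [Finite V] :
    distinguishingNumber (⊤ : SimpleGraph V) = Nat.card V := by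
  refine IsLeast.csInf_eq ⟨⟨Finite.equivFin V, ?_⟩, ?_⟩
  · exact isDistinguishingVertexLabeling_top_iff_injective.2 (Finite.equivFin V).injective
  · rintro d ⟨φ, hφ⟩
    have hinj : Function.Injective φ := isDistinguishingVertexLabeling_top_iff_injective.1 hφ
    simpa using Nat.card_le_card_of_injective φ hinj

theorem distinguishingIndex_top (hV : 6 ≤ Nat.card V) :
    distinguishingIndex (⊤ : SimpleGraph V) = 2 := by
  have : Finite V := Nat.finite_of_card_ne_zero (by omega)
  have : Nontrivial V := Finite.one_lt_card_iff_nontrivial.1 (by omega)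
  obtain ⟨H, hH⟩ := exists_isAsymmetric hV
  exact distinguishingIndex_eq_two not_isAsymmetric_top hH le_top

theorem distinguishingNumber_sub_distinguishingIndex_top (hV : 6 ≤ Nat.card V) :
    (distinguishingNumber (⊤ : SimpleGraph V) : ℤ) - distinguishingIndex (⊤ : SimpleGraph V) =
      Nat.card V - 2 := by
  have : Finite V := Nat.finite_of_card_ne_zero (by omega)
  rw [distinguishingNumber_top, distinguishingIndex_top hV, Nat.cast_ofNat]

end CompleteGraph

/-- The gap between the distinguishing number and the distinguishing index can be arbitrarily
large: for every integer `N` there is a finite connected simple graph `G` with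
`D(G) − D'(G) ≥ N`; in particular, for `p ≥ 6` the complete graph `K_p` satisfies
`D(K_p) − D'(K_p) = p − 2`. -/
theorem distinguishingNumber_sub_distinguishingIndex_unbounded :
    (∀ N : ℤ, ∃ (V : Type) (_ : Fintype V) (G : SimpleGraph V),
      G.Connected ∧
        N ≤ (distinguishingNumber G : ℤ) - (distinguishingIndex G : ℤ)) ∧
    (∀ p : ℕ, 6 ≤ p →
      (distinguishingNumber (⊤ : SimpleGraph (Fin p)) : ℤ) -
        (distinguishingIndex (⊤ : SimpleGraph (Fin p)) : ℤ) = (p : ℤ) - 2) := by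
  have gap (p : ℕ) (hp : 6 ≤ p) :
      (distinguishingNumber (⊤ : SimpleGraph (Fin p)) : ℤ) -
        distinguishingIndex (⊤ : SimpleGraph (Fin p)) = p - 2 := by
    simpa using distinguishingNumber_sub_distinguishingIndex_top (V := Fin p) (by simpa using hp)
  refine ⟨fun N ↦ ⟨Fin (N.toNat + 6), inferInstance, ⊤, connected_top, ?_⟩, gap⟩
  rw [gap _ (by omega)]
  omega
end
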